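/- arXiv:1605.00479 — 2 statements merged into one kernel-verified Lean document; each statement's English description precedes it below -/
import Mathlib

section
/- Let A ∈ ℝ^{n×p}, let α > 0, β > 0, and let S ⊆ {1,…,p} with |S| ≤ k. Suppose that every nonzero h in the null space of A satisfies (1 + βα)·‖h_S‖₁ ≤ ‖h_{S̄}‖₁, where h_S denotes the restriction of h to the coordinates in S and S̄ is the complement of S. Then every k-sparse vector x₀ ∈ ℝ^p supported on S is the unique minimizer of ‖x‖₁ + β·Φ_α(x) subject to Ax = Ax₀. -/
open Finset

/-- The penalty function `φ_α(t) = α|t| / (1 + α|t|)`. -/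
noncomputable def phi (α t : ℝ) : ℝ := α * |t| / (1 + α * |t|)

/-- `Φ_α(x) = ∑_i φ_α(x_i)`. -/
noncomputable def Phi (α : ℝ) {p : ℕ} (x : Fin p → ℝ) : ℝ := ∑ i, phi α (x i)

/-- Restriction of a vector to an index set `S` (zero outside `S`). -/
def restr {p : ℕ} (x : Fin p → ℝ) (S : Finset (Fin p)) : Fin p → ℝ :=
  fun i => if i ∈ S then x i else 0

/-- The ℓ¹ norm. -/
noncomputable def l1 {p : ℕ} (x : Fin p → ℝ) : ℝ := ∑ i, |x i|

/-!
Put `h = x - x₀` and let `f t = |t| + β φ_α(t)` be the cost of one coordinate. Moving a coordinate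
of `x₀` from `a` to `b ≠ a` lowers its cost by strictly less than `(1 + β α) |b - a|`, because
`u ↦ u / (1 + u)` is monotone, subadditive and lies below the identity on `u > 0`. A coordinate
leaving `0` pays strictly more than its absolute value. So the loss on `S` is at most
`(1 + β α) ‖h_S‖₁` and the gain off `S` at least `‖h_{S̄}‖₁`, strictly on any coordinate where
`h ≠ 0`, and the null space condition makes the net change positive. These two bounds are all that
the argument needs of `f`.
-/

theorem div_one_add_lt_div_one_add_add {𝕜 : Type*} [Field 𝕜] [LinearOrder 𝕜]
    [IsStrictOrderedRing 𝕜] {a b d : 𝕜} (ha : 0 ≤ a) (hb : 0 ≤ b) (hd : 0 < d) (h : a ≤ b + d) :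
    a / (1 + a) < b / (1 + b) + d :=
  calc a / (1 + a)
      ≤ (b + d) / (1 + (b + d)) := by
        rw [div_le_div_iff₀ (by positivity) (by positivity)]
        linarith
    _ = b / (1 + (b + d)) + d / (1 + (b + d)) := add_div ..
    _ < b / (1 + b) + d := by
        refine add_lt_add_of_le_of_lt ?_ (div_lt_self hd (by linarith))
        gcongr
        linarith

section Penalty

variable {α β : ℝ} {p : ℕ}

theorem phi_zero : phi α 0 = 0 := by simp [phi]

theorem phi_pos (hα : 0 < α) {t : ℝ} (ht : t ≠ 0) : 0 < phi α t := by
  unfold phi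
  positivity

theorem phi_lt_phi_add_mul_abs_sub (hα : 0 < α) {s t : ℝ} (h : s ≠ t) :
    phi α t < phi α s + α * |s - t| := by
  refine div_one_add_lt_div_one_add_add (by positivity) (by positivity)
    (mul_pos hα (abs_sub_pos.mpr h)) ?_
  have htri : |t| ≤ |s| + |s - t| := by
    simpa only [add_comm, abs_sub_comm t s, sub_le_iff_le_add] using abs_sub_abs_le_abs_sub t s
  rw [← mul_add]
  gcongr

theorem abs_add_mul_phi_lt_add_mul_abs_sub (hα : 0 < α) (hβ : 0 < β) {s t : ℝ} (h : s ≠ t) :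
    |t| + β * phi α t < |s| + β * phi α s + (1 + β * α) * |s - t| := by
  have habs : |t| - |s| ≤ |s - t| := abs_sub_comm s t ▸ abs_sub_abs_le_abs_sub t s
  have hphi := mul_lt_mul_of_pos_left (phi_lt_phi_add_mul_abs_sub hα h) hβ
  linarith

theorem abs_lt_abs_add_mul_phi (hα : 0 < α) (hβ : 0 < β) {t : ℝ} (ht : t ≠ 0) :
    |t| < |t| + β * phi α t :=
  lt_add_of_pos_right _ (mul_pos hβ (phi_pos hα ht))

theorem l1_restr (x : Fin p → ℝ) (S : Finset (Fin p)) : l1 (restr x S) = ∑ i ∈ S, |x i| := by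
  simp only [l1, restr, apply_ite abs, abs_zero, sum_ite_mem, univ_inter]

theorem l1_add_mul_Phi (x : Fin p → ℝ) :
    l1 x + β * Phi α x = ∑ i, (|x i| + β * phi α (x i)) := by
  simp only [l1, Phi, mul_sum, sum_add_distrib]

end Penalty

section SeparableCost

variable {ι E M : Type*} [Fintype ι] [DecidableEq ι] [NormedAddCommGroup E] [AddGroup M]
  {f : E → ℝ} {K : ℝ} {S : Finset ι}

theorem sum_lt_sum_of_mul_sum_norm_le_sum_compl_norm
    (hf_drop : ∀ a b, a ≠ b → f b < f a + K * ‖a - b‖)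
    (hf_growth : ∀ t, t ≠ 0 → f 0 + ‖t‖ < f t)
    {x x₀ : ι → E} (hsupp : ∀ i, x₀ i ≠ 0 → i ∈ S) (hne : x ≠ x₀)
    (hS : K * ∑ i ∈ S, ‖x i - x₀ i‖ ≤ ∑ i ∈ Sᶜ, ‖x i - x₀ i‖) :
    ∑ i, f (x₀ i) < ∑ i, f (x i) := by
  let gain (i : ι) : ℝ := if i ∈ S then -(K * ‖x i - x₀ i‖) else ‖x i - x₀ i‖
  have gain_lt (i : ι) (hi : x i ≠ x₀ i) : f (x₀ i) + gain i < f (x i) := by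
    by_cases hiS : i ∈ S
    · simpa only [gain, if_pos hiS, ← sub_eq_add_neg, sub_lt_iff_lt_add] using hf_drop _ _ hi
    · have hx₀ : x₀ i = 0 := not_imp_comm.mp (hsupp i) hiS
      simpa only [gain, if_neg hiS, hx₀, sub_zero] using hf_growth (x i) (hx₀ ▸ hi)
  have gain_le (i : ι) : f (x₀ i) + gain i ≤ f (x i) := by
    by_cases hi : x i = x₀ i
    · simp [gain, hi]
    · exact (gain_lt i hi).le
  have sum_gain : ∑ i, gain i = ∑ i ∈ Sᶜ, ‖x i - x₀ i‖ - K * ∑ i ∈ S, ‖x i - x₀ i‖ := by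
    simp only [gain, sum_ite, filter_mem_eq_inter, univ_inter, filter_notMem_eq_sdiff,
      ← compl_eq_univ_sdiff, sum_neg_distrib, ← mul_sum]
    ring
  obtain ⟨j, hj⟩ := Function.ne_iff.mp hne
  calc ∑ i, f (x₀ i)
      ≤ ∑ i, f (x₀ i) + ∑ i, gain i := le_add_of_nonneg_right (sum_gain ▸ sub_nonneg.mpr hS)
    _ = ∑ i, (f (x₀ i) + gain i) := sum_add_distrib.symm
    _ < ∑ i, f (x i) := sum_lt_sum (fun i _ ↦ gain_le i) ⟨j, mem_univ j, gain_lt j hj⟩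

theorem stmt0_general (A : (ι → E) →+ M)
    (hf_drop : ∀ a b, a ≠ b → f b < f a + K * ‖a - b‖)
    (hf_growth : ∀ t, t ≠ 0 → f 0 + ‖t‖ < f t)
    (hNSP : ∀ h : ι → E, A h = 0 → h ≠ 0 → K * ∑ i ∈ S, ‖h i‖ ≤ ∑ i ∈ Sᶜ, ‖h i‖)
    (x₀ : ι → E) (hsupp : ∀ i, x₀ i ≠ 0 → i ∈ S) (x : ι → E) (hx : A x = A x₀) (hne : x ≠ x₀) :
    ∑ i, f (x₀ i) < ∑ i, f (x i) :=
  sum_lt_sum_of_mul_sum_norm_le_sum_compl_norm hf_drop hf_growth hsupp hne <|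
    hNSP (x - x₀) (by rw [map_sub, hx, sub_self]) (sub_ne_zero.mpr hne)

end SeparableCost

theorem stmt0 {n p k : ℕ} (A : Matrix (Fin n) (Fin p) ℝ) (α β : ℝ)
    (hα : 0 < α) (hβ : 0 < β)
    (S : Finset (Fin p)) (hS : S.card ≤ k)
    (hNSP : ∀ h : Fin p → ℝ, A.mulVec h = 0 → h ≠ 0 →
      (1 + β * α) * l1 (restr h S) ≤ l1 (restr h Sᶜ))
    (x₀ : Fin p → ℝ) (hsupp : ∀ i, x₀ i ≠ 0 → i ∈ S) :
    ∀ x : Fin p → ℝ, A.mulVec x = A.mulVec x₀ → x ≠ x₀ →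
      l1 x₀ + β * Phi α x₀ < l1 x + β * Phi α x := by
  simp only [l1_restr] at hNSP
  simp only [l1_add_mul_Phi]
  exact stmt0_general A.mulVecLin.toAddMonoidHom
    (fun _ _ ↦ abs_add_mul_phi_lt_add_mul_abs_sub hα hβ)
    (fun t ht ↦ by simpa [phi_zero] using abs_lt_abs_add_mul_phi hα hβ ht) hNSP x₀ hsupp
end

section
/- Let 𝒜 : ℝ^{n₁×n₂} → ℝ^{n₃} be a linear map, let α > 0, β > 0, and let r ≤ m = min(n₁, n₂). Suppose every nonzero H in the null space of 𝒜 satisfies (1 + βα)·∑_{i=1}^r σ_i(H) ≤ ∑_{i=r+1}^m σ_i(H). Then every matrix X ∈ ℝ^{n₁×n₂} of rank at most r is the unique minimizer of ‖Z‖_* + β·Φ̂_α(Z) subject to 𝒜Z = 𝒜X. -/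
open Finset Matrix

/-- The ℓ² norm of a vector. -/
noncomputable def l2 {p : ℕ} (x : Fin p → ℝ) : ℝ := Real.sqrt (∑ i, (x i) ^ 2)

/-- The Frobenius norm of a matrix. -/
noncomputable def frob {n₁ n₂ : ℕ} (X : Matrix (Fin n₁) (Fin n₂) ℝ) : ℝ :=
  Real.sqrt (∑ i, ∑ j, (X i j) ^ 2)

/-- The rectangular `n₁ × n₂` matrix with `σ` on the diagonal and zeros elsewhere. -/
def diagRect {n₁ n₂ : ℕ} (σ : Fin (min n₁ n₂) → ℝ) : Matrix (Fin n₁) (Fin n₂) ℝ :=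
  Matrix.of fun i j =>
    if h : (i : ℕ) = (j : ℕ) then σ ⟨i, lt_min i.isLt (lt_of_eq_of_lt h j.isLt)⟩ else 0

/-- `σ` is the (nonincreasing) sequence of singular values of `X`:
`σ` is antitone, nonnegative, and `X = U (diag σ) Vᵀ` for orthogonal `U`, `V`. -/
def IsSVDVals {n₁ n₂ : ℕ} (X : Matrix (Fin n₁) (Fin n₂) ℝ)
    (σ : Fin (min n₁ n₂) → ℝ) : Prop :=
  Antitone σ ∧ (∀ i, 0 ≤ σ i) ∧
  ∃ (U : Matrix (Fin n₁) (Fin n₁) ℝ) (V : Matrix (Fin n₂) (Fin n₂) ℝ),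
    Uᵀ * U = 1 ∧ Vᵀ * V = 1 ∧ X = U * diagRect σ * Vᵀ

/-- `𝒜` satisfies the rank restricted isometry property of order `r`
with constant `δ ∈ [0,1)`. -/
def RankRIP {n₁ n₂ n₃ : ℕ} (𝒜 : Matrix (Fin n₁) (Fin n₂) ℝ →ₗ[ℝ] (Fin n₃ → ℝ))
    (r : ℕ) (δ : ℝ) : Prop :=
  0 ≤ δ ∧ δ < 1 ∧ ∀ X : Matrix (Fin n₁) (Fin n₂) ℝ, X.rank ≤ r →
    (1 - δ) * (frob X) ^ 2 ≤ (l2 (𝒜 X)) ^ 2 ∧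
    (l2 (𝒜 X)) ^ 2 ≤ (1 + δ) * (frob X) ^ 2

/-!
Lidskii's inequality for symmetric operators, applied to the Hermitian dilations of `A` and `B`,
gives Mirsky's inequality: the `k` differences `|σᵢ(A) - σᵢ(B)|` over any `k` indices sum to at most
the sum of the `k` largest singular values of `A - B`.

Let `H = X - Z` be nonzero in the null space, with head `a = ∑_{i ≤ r} σᵢ(H)` and tail
`b = ∑_{i > r} σᵢ(H)`. As `σᵢ(X) = 0` for `i > r`, Mirsky's inequality for `X` and `H` gives
`‖X‖_* + b ≤ ‖Z‖_* + a`, and for `X` and `Z` it gives `∑ (σᵢ(X) - σᵢ(Z))⁺ ≤ a`. The penalty is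
monotone with secant slopes below `α`, so it drops by less than `α a` from `X` to `Z` if some
singular value decreases, and not at all otherwise. In the first case `(1 + βα) a ≤ b` closes the
gap; in the second it gives `a < b`, because `a + b > 0`.
-/

section SymmetricOperator

open Module InnerProductSpace LinearMap

variable {𝕜 E : Type*} [RCLike 𝕜] [NormedAddCommGroup E] [InnerProductSpace 𝕜 E]

lemma re_inner_apply_self_eq_sum_of_eigenbasis {ι : Type*} [Fintype ι] {T : E →ₗ[𝕜] E}
    (b : OrthonormalBasis ι 𝕜 E) {c : ι → ℝ} (hb : ∀ i, T (b i) = (c i : 𝕜) • b i) (x : E) :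
    RCLike.re ⟪T x, x⟫_𝕜 = ∑ i, c i * ‖⟪b i, x⟫_𝕜‖ ^ 2 := by
  have hTx : T x = ∑ i, (⟪b i, x⟫_𝕜 * c i) • b i := by
    conv_lhs => rw [← b.sum_repr' x]
    simp only [map_sum, map_smul, hb, smul_smul]
  simp only [hTx, sum_inner, inner_smul_left, map_sum, map_mul, RCLike.conj_ofReal]
  refine sum_congr rfl fun i _ => ?_
  rw [mul_right_comm, RCLike.conj_mul, mul_comm, ← RCLike.ofReal_pow, ← RCLike.ofReal_mul,
    RCLike.ofReal_re]

lemma re_inner_apply_self_le_of_eigenbasis {ι : Type*} [Fintype ι] {T : E →ₗ[𝕜] E}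
    (b : OrthonormalBasis ι 𝕜 E) {c : ι → ℝ} (hb : ∀ i, T (b i) = (c i : 𝕜) • b i) {C : ℝ} {x : E}
    (hx : ∀ i, C < c i → ⟪b i, x⟫_𝕜 = 0) : RCLike.re ⟪T x, x⟫_𝕜 ≤ C * ‖x‖ ^ 2 := by
  rw [re_inner_apply_self_eq_sum_of_eigenbasis b hb, ← b.sum_sq_norm_inner_right, mul_sum]
  refine sum_le_sum fun i _ => ?_
  rcases le_or_gt (c i) C with h | h
  · gcongr
  · simp [hx i h]

lemma le_re_inner_apply_self_of_eigenbasis {ι : Type*} [Fintype ι] {T : E →ₗ[𝕜] E}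
    (b : OrthonormalBasis ι 𝕜 E) {c : ι → ℝ} (hb : ∀ i, T (b i) = (c i : 𝕜) • b i) {C : ℝ} {x : E}
    (hx : ∀ i, c i < C → ⟪b i, x⟫_𝕜 = 0) : C * ‖x‖ ^ 2 ≤ RCLike.re ⟪T x, x⟫_𝕜 := by
  rw [re_inner_apply_self_eq_sum_of_eigenbasis b hb, ← b.sum_sq_norm_inner_right, mul_sum]
  refine sum_le_sum fun i _ => ?_
  rcases le_or_gt C (c i) with h | h
  · gcongr
  · simp [hx i h]

lemma re_trace_eq_sum_of_eigenbasis {ι : Type*} [Fintype ι] {T : E →ₗ[𝕜] E}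
    (b : OrthonormalBasis ι 𝕜 E) {c : ι → ℝ} (hb : ∀ i, T (b i) = (c i : 𝕜) • b i) :
    RCLike.re (T.trace 𝕜 E) = ∑ i, c i := by
  simp [T.trace_eq_sum_inner b, hb, inner_smul_right]

lemma exists_isSymmetric_eigenbasis {ι : Type*} [Fintype ι] (b : OrthonormalBasis ι 𝕜 E)
    (c : ι → ℝ) : ∃ T : E →ₗ[𝕜] E, T.IsSymmetric ∧ ∀ i, T (b i) = (c i : 𝕜) • b i := by
  classical
  refine ⟨∑ i, (c i : 𝕜) • (rankOne 𝕜 (b i) (b i)).toLinearMap,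
    isSymmetric_sum _ fun i _ => (isSymmetric_rankOne_self (b i)).smul (RCLike.conj_ofReal _), ?_⟩
  simp [LinearMap.sum_apply, b.inner_eq_ite]

lemma inner_eq_zero_of_mem_orthogonal_span_image {ι : Type*} {f : ι → E} {s : Set ι} {x : E}
    (hx : x ∈ (Submodule.span 𝕜 (f '' s))ᗮ) {i : ι} (hi : i ∈ s) : ⟪f i, x⟫_𝕜 = 0 :=
  Submodule.inner_right_of_mem_orthogonal (Submodule.subset_span (Set.mem_image_of_mem f hi)) hx

variable [FiniteDimensional 𝕜 E]

lemma finrank_le_card_add_finrank_orthogonal_span_image {ι : Type*} (f : ι → E) (s : Finset ι) :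
    finrank 𝕜 E ≤ #s + finrank 𝕜 (Submodule.span 𝕜 (f '' s))ᗮ := by
  classical
  rw [← (Submodule.span 𝕜 (f '' s)).finrank_add_finrank_orthogonal, ← coe_image]
  gcongr
  exact (finrank_span_finset_le_card _).trans card_image_le

variable {n : ℕ} (hn : finrank 𝕜 E = n)

/- Courant–Fischer: `W` meets the orthogonal complement of the first `i` eigenvectors, where the
quadratic form is at most `λᵢ ‖x‖²`. -/
lemma le_eigenvalues_of_forall_mem {T : E →ₗ[𝕜] E} (hT : T.IsSymmetric) {i : Fin n} {C : ℝ}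
    (W : Submodule 𝕜 E) (hW : (i : ℕ) + 1 ≤ finrank 𝕜 W)
    (hC : ∀ x ∈ W, C * ‖x‖ ^ 2 ≤ RCLike.re ⟪T x, x⟫_𝕜) : C ≤ hT.eigenvalues hn i := by
  set b := hT.eigenvectorBasis hn
  set V := (Submodule.span 𝕜 (b '' (Iio i : Finset (Fin n))))ᗮ
  have hdim : n ≤ i + finrank 𝕜 V := by
    simpa only [hn, Fin.card_Iio] using
      finrank_le_card_add_finrank_orthogonal_span_image (𝕜 := 𝕜) b (Iio i)
  have hmeet : ¬ Disjoint W V := fun h => by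
    have := Submodule.finrank_add_finrank_le_of_disjoint h
    omega
  obtain ⟨x, hxW, hxV, hx0⟩ : ∃ x ∈ W, x ∈ V ∧ x ≠ 0 := by
    simpa [Submodule.disjoint_def] using hmeet
  have hupper : RCLike.re ⟪T x, x⟫_𝕜 ≤ hT.eigenvalues hn i * ‖x‖ ^ 2 := by
    refine re_inner_apply_self_le_of_eigenbasis b (hT.apply_eigenvectorBasis hn) fun j hj =>
      inner_eq_zero_of_mem_orthogonal_span_image hxV ?_
    simpa using (hT.eigenvalues_antitone hn).reflect_lt hj
  exact le_of_mul_le_mul_right ((hC x hxW).trans hupper) (by positivity)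

lemma le_eigenvalues_of_antitone_eigenbasis {S T : E →ₗ[𝕜] E} (hT : T.IsSymmetric)
    (b : OrthonormalBasis (Fin n) 𝕜 E) {c : Fin n → ℝ} (hc : Antitone c)
    (hb : ∀ i, S (b i) = (c i : 𝕜) • b i) {t : ℝ}
    (hST : ∀ x, RCLike.re ⟪S x, x⟫_𝕜 ≤ RCLike.re ⟪T x, x⟫_𝕜 + t * ‖x‖ ^ 2) (i : Fin n) :
    c i - t ≤ hT.eigenvalues hn i := by
  refine le_eigenvalues_of_forall_mem hn hT
    (Submodule.span 𝕜 (b '' (Ioi i : Finset (Fin n))))ᗮ ?_ fun x hx => ?_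
  · have := finrank_le_card_add_finrank_orthogonal_span_image (𝕜 := 𝕜) b (Ioi i)
    simp only [hn, Fin.card_Ioi] at this
    omega
  · have hlower := le_re_inner_apply_self_of_eigenbasis b hb (C := c i) fun j hj =>
      inner_eq_zero_of_mem_orthogonal_span_image hx (by simpa using hc.reflect_lt hj)
    linarith [hST x]

lemma eigenvalues_le_eigenvalues_add {S T : E →ₗ[𝕜] E} (hS : S.IsSymmetric) (hT : T.IsSymmetric)
    {t : ℝ} (hST : ∀ x, RCLike.re ⟪S x, x⟫_𝕜 ≤ RCLike.re ⟪T x, x⟫_𝕜 + t * ‖x‖ ^ 2) (i : Fin n) :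
    hS.eigenvalues hn i ≤ hT.eigenvalues hn i + t :=
  sub_le_iff_le_add.mp <| le_eigenvalues_of_antitone_eigenbasis hn hT (hS.eigenvectorBasis hn)
    (hS.eigenvalues_antitone hn) (hS.apply_eigenvectorBasis hn) hST i

lemma eigenvalues_eq_of_le_of_sum_eq_trace {T : E →ₗ[𝕜] E} (hT : T.IsSymmetric) {c : Fin n → ℝ}
    (hle : ∀ i, c i ≤ hT.eigenvalues hn i) (hsum : ∑ i, c i = RCLike.re (T.trace 𝕜 E)) :
    hT.eigenvalues hn = c := by
  rw [hT.re_trace_eq_sum_eigenvalues hn, sum_eq_sum_iff_of_le fun i _ => hle i] at hsum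
  exact funext fun i => (hsum i (mem_univ i)).symm

lemma eigenvalues_eq_of_antitone_eigenbasis {T : E →ₗ[𝕜] E} (hT : T.IsSymmetric)
    (b : OrthonormalBasis (Fin n) 𝕜 E) {c : Fin n → ℝ} (hc : Antitone c)
    (hb : ∀ i, T (b i) = (c i : 𝕜) • b i) : hT.eigenvalues hn = c := by
  refine eigenvalues_eq_of_le_of_sum_eq_trace hn hT (fun i => ?_)
    (re_trace_eq_sum_of_eigenbasis b hb).symm
  simpa using le_eigenvalues_of_antitone_eigenbasis hn hT b hc hb (t := 0) (by simp) i

lemma exists_isSymmetric_posPart_sub {D : E →ₗ[𝕜] E} (hD : D.IsSymmetric) (t : ℝ) :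
    ∃ Q : E →ₗ[𝕜] E, Q.IsSymmetric ∧ (∀ x, 0 ≤ RCLike.re ⟪Q x, x⟫_𝕜) ∧
      (∀ x, RCLike.re ⟪D x, x⟫_𝕜 ≤ RCLike.re ⟪Q x, x⟫_𝕜 + t * ‖x‖ ^ 2) ∧
      RCLike.re (Q.trace 𝕜 E) = ∑ i, (hD.eigenvalues hn i - t)⁺ := by
  set b := hD.eigenvectorBasis hn
  set μ := hD.eigenvalues hn
  have hb : ∀ i, D (b i) = (μ i : 𝕜) • b i := hD.apply_eigenvectorBasis hn
  obtain ⟨Q, hQ, hQb⟩ := exists_isSymmetric_eigenbasis b fun i => (μ i - t)⁺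
  refine ⟨Q, hQ, fun x => ?_, fun x => ?_, re_trace_eq_sum_of_eigenbasis b hQb⟩
  · rw [re_inner_apply_self_eq_sum_of_eigenbasis b hQb]
    exact sum_nonneg fun i _ => mul_nonneg (posPart_nonneg _) (sq_nonneg _)
  · rw [re_inner_apply_self_eq_sum_of_eigenbasis b hQb,
      re_inner_apply_self_eq_sum_of_eigenbasis b hb, ← b.sum_sq_norm_inner_right, mul_sum,
      ← sum_add_distrib]
    refine sum_le_sum fun i _ => ?_
    rw [← add_mul]
    gcongr
    exact sub_le_iff_le_add.mp (le_posPart _)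

/- The Li–Mathias argument: if `Q` is the positive part of `S - T - t`, then `S - t` and `T` both
lie below `T + Q`, so that each summand is at most `λᵢ(T + Q) - λᵢ(T) + t` by monotonicity. -/
lemma sum_eigenvalues_sub_le_sum_posPart {S T : E →ₗ[𝕜] E} (hS : S.IsSymmetric)
    (hT : T.IsSymmetric) (s : Finset (Fin n)) (t : ℝ) :
    ∑ i ∈ s, (hS.eigenvalues hn i - hT.eigenvalues hn i) ≤
      ∑ i, ((hS.sub hT).eigenvalues hn i - t)⁺ + #s * t := by
  set μ := (hS.sub hT).eigenvalues hn
  obtain ⟨Q, hQ, hQ_nonneg, hQ_ge, hQ_trace⟩ :=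
    exists_isSymmetric_posPart_sub hn (hS.sub hT) t
  have hle_S (i : Fin n) : hS.eigenvalues hn i ≤ (hT.add hQ).eigenvalues hn i + t :=
    eigenvalues_le_eigenvalues_add hn hS (hT.add hQ) (fun x => by
      have := hQ_ge x
      simp only [LinearMap.sub_apply, LinearMap.add_apply, inner_sub_left, inner_add_left,
        map_sub, map_add] at this ⊢
      linarith) i
  have hle_T (i : Fin n) : hT.eigenvalues hn i ≤ (hT.add hQ).eigenvalues hn i := by
    simpa using eigenvalues_le_eigenvalues_add hn hT (hT.add hQ) (t := 0) (fun x => by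
      simpa [inner_add_left] using hQ_nonneg x) i
  have htrace : ∑ i, ((hT.add hQ).eigenvalues hn i - hT.eigenvalues hn i) =
      ∑ i, (μ i - t)⁺ := by
    rw [sum_sub_distrib, ← (hT.add hQ).re_trace_eq_sum_eigenvalues hn,
      ← hT.re_trace_eq_sum_eigenvalues hn, map_add, map_add, add_sub_cancel_left, hQ_trace]
  calc ∑ i ∈ s, (hS.eigenvalues hn i - hT.eigenvalues hn i)
      ≤ ∑ i ∈ s, ((hT.add hQ).eigenvalues hn i - hT.eigenvalues hn i + t) :=
        sum_le_sum fun i _ => by linarith [hle_S i]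
    _ = ∑ i ∈ s, ((hT.add hQ).eigenvalues hn i - hT.eigenvalues hn i) + #s * t := by
        rw [sum_add_distrib, sum_const, nsmul_eq_mul]
    _ ≤ ∑ i, (μ i - t)⁺ + #s * t := by
        rw [← htrace]
        gcongr
        · exact fun i _ _ => sub_nonneg.mpr (hle_T i)
        · exact s.subset_univ

theorem sum_eigenvalues_sub_le {S T : E →ₗ[𝕜] E} (hS : S.IsSymmetric) (hT : T.IsSymmetric)
    (s : Finset (Fin n)) :
    ∑ i ∈ s, (hS.eigenvalues hn i - hT.eigenvalues hn i) ≤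
      ∑ i : Fin n with i.val < #s, (hS.sub hT).eigenvalues hn i := by
  set μ := (hS.sub hT).eigenvalues hn
  have hμ : Antitone μ := (hS.sub hT).eigenvalues_antitone hn
  rcases s.eq_empty_or_nonempty with rfl | hs
  · simp
  have hcard : #s ≤ n := by simpa using s.card_le_univ
  have hpos := hs.card_pos
  let k : Fin n := ⟨#s - 1, by omega⟩
  have hposPart (i : Fin n) : (μ i - μ k)⁺ = if (i : ℕ) < #s then μ i - μ k else 0 := by
    split_ifs with h
    · exact posPart_of_nonneg (sub_nonneg.mpr (hμ (by simp only [k, Fin.le_def]; omega)))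
    · exact posPart_of_nonpos (sub_nonpos.mpr (hμ (by simp only [k, Fin.le_def]; omega)))
  refine (sum_eigenvalues_sub_le_sum_posPart hn hS hT s (μ k)).trans_eq ?_
  calc ∑ i, (μ i - μ k)⁺ + #s * μ k
      = ∑ i : Fin n with i.val < #s, (μ i - μ k) + #s * μ k := by simp only [hposPart, sum_filter]
    _ = ∑ i : Fin n with i.val < #s, μ i := by
        rw [sum_sub_distrib, sum_const, Fin.card_filter_val_lt, min_eq_right hcard, nsmul_eq_mul,
          sub_add_cancel]

end SymmetricOperator

section SingularValues

open Module InnerProductSpace LinearMap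

variable {𝕜 E F : Type*} [RCLike 𝕜]
  [NormedAddCommGroup E] [InnerProductSpace 𝕜 E] [FiniteDimensional 𝕜 E]
  [NormedAddCommGroup F] [InnerProductSpace 𝕜 F] [FiniteDimensional 𝕜 F]

lemma re_inner_adjoint_comp_self_apply (T : E →ₗ[𝕜] F) (x : E) :
    RCLike.re ⟪(adjoint T ∘ₗ T) x, x⟫_𝕜 = ‖T x‖ ^ 2 := by
  rw [LinearMap.comp_apply, adjoint_inner_left, inner_self_eq_norm_sq]

lemma norm_apply_le_singularValues_mul_norm (T : E →ₗ[𝕜] F) {n : ℕ} (hn : finrank 𝕜 E = n) {k : ℕ}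
    {x : E} (hx : ∀ j : Fin n, (j : ℕ) < k →
      ⟪T.isSymmetric_adjoint_comp_self.eigenvectorBasis hn j, x⟫_𝕜 = 0) :
    ‖T x‖ ≤ T.singularValues k * ‖x‖ := by
  have hσ := T.singularValues_nonneg
  rw [← pow_le_pow_iff_left₀ (by positivity) (mul_nonneg (hσ k) (by positivity)) two_ne_zero,
    mul_pow, ← re_inner_adjoint_comp_self_apply]
  refine re_inner_apply_self_le_of_eigenbasis _
    (T.isSymmetric_adjoint_comp_self.apply_eigenvectorBasis hn) fun j hj => hx j ?_
  rw [← sq_singularValues_fin, pow_lt_pow_iff_left₀ (hσ k) (hσ j) two_ne_zero] at hj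
  exact T.singularValues_antitone.reflect_lt hj

lemma singularValues_mul_norm_le_norm_apply (T : E →ₗ[𝕜] F) {n : ℕ} (hn : finrank 𝕜 E = n) {k : ℕ}
    {x : E} (hx : ∀ j : Fin n, k < (j : ℕ) →
      ⟪T.isSymmetric_adjoint_comp_self.eigenvectorBasis hn j, x⟫_𝕜 = 0) :
    T.singularValues k * ‖x‖ ≤ ‖T x‖ := by
  have hσ := T.singularValues_nonneg
  rw [← pow_le_pow_iff_left₀ (mul_nonneg (hσ k) (by positivity)) (by positivity) two_ne_zero,
    mul_pow, ← re_inner_adjoint_comp_self_apply]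
  refine le_re_inner_apply_self_of_eigenbasis _
    (T.isSymmetric_adjoint_comp_self.apply_eigenvectorBasis hn) fun j hj => hx j ?_
  rw [← sq_singularValues_fin, pow_lt_pow_iff_left₀ (hσ j) (hσ k) two_ne_zero] at hj
  exact T.singularValues_antitone.reflect_lt hj

/-- The Hermitian dilation `[[0, T†], [T, 0]]` of `T`, a symmetric operator on the orthogonal direct
sum `E ⊕ F` whose eigenvalues are the singular values of `T`, their negatives, and zeros. -/
noncomputable def hermitianDilation (T : E →ₗ[𝕜] F) : WithLp 2 (E × F) →ₗ[𝕜] WithLp 2 (E × F) where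
  toFun z := WithLp.toLp 2 (adjoint T z.snd, T z.fst)
  map_add' z w := by simp [← WithLp.toLp_add]
  map_smul' c z := by simp [← WithLp.toLp_smul]

lemma hermitianDilation_apply (T : E →ₗ[𝕜] F) (z : WithLp 2 (E × F)) :
    hermitianDilation T z = WithLp.toLp 2 (adjoint T z.snd, T z.fst) := rfl

namespace hermitianDilation

lemma isSymmetric (T : E →ₗ[𝕜] F) : (hermitianDilation T).IsSymmetric := fun z w => by
  simp [hermitianDilation_apply, WithLp.prod_inner_apply, adjoint_inner_left,
    adjoint_inner_right, add_comm]

lemma sub (S T : E →ₗ[𝕜] F) :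
    hermitianDilation (S - T) = hermitianDilation S - hermitianDilation T := by
  ext1 z
  simp [hermitianDilation_apply, ← WithLp.toLp_sub]

lemma re_inner_apply_self (T : E →ₗ[𝕜] F) (z : WithLp 2 (E × F)) :
    RCLike.re ⟪hermitianDilation T z, z⟫_𝕜 = 2 * RCLike.re ⟪T z.fst, z.snd⟫_𝕜 := by
  simp only [hermitianDilation_apply, WithLp.prod_inner_apply, adjoint_inner_left, map_add]
  rw [inner_re_symm, two_mul]
  rfl

lemma trace_eq_zero (T : E →ₗ[𝕜] F) : (hermitianDilation T).trace 𝕜 _ = 0 := by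
  rw [trace_eq_sum_inner _ ((stdOrthonormalBasis 𝕜 E).prod (stdOrthonormalBasis 𝕜 F))]
  simp [hermitianDilation_apply, OrthonormalBasis.prod_apply, WithLp.prod_inner_apply]

lemma singularValues_rev_eq_zero {N : ℕ} (hN : finrank 𝕜 (WithLp 2 (E × F)) = N) (T : E →ₗ[𝕜] F)
    {i : Fin N} (hi : (i : ℕ) < finrank 𝕜 F) : T.singularValues i.rev = 0 := by
  rw [(WithLp.linearEquiv 2 𝕜 (E × F)).finrank_eq, finrank_prod] at hN
  refine T.singularValues_of_finrank_le ?_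
  rw [Fin.val_rev]
  omega

variable {N : ℕ} (hN : finrank 𝕜 (WithLp 2 (E × F)) = N)

lemma neg_singularValues_le_eigenvalues (T : E →ₗ[𝕜] F) (i : Fin N) :
    -T.singularValues i.rev ≤ (isSymmetric T).eigenvalues hN i := by
  let v := T.isSymmetric_adjoint_comp_self.eigenvectorBasis rfl
  let f : Fin (finrank 𝕜 E) → WithLp 2 (E × F) := fun j => WithLp.toLp 2 (v j, 0)
  let s : Finset (Fin (finrank 𝕜 E)) := {j | (j : ℕ) < i.rev}
  refine le_eigenvalues_of_forall_mem hN _ (Submodule.span 𝕜 (f '' s))ᗮ ?_ fun z hz => ?_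
  · have hdim := finrank_le_card_add_finrank_orthogonal_span_image (𝕜 := 𝕜) f s
    rw [hN, Fin.card_filter_val_lt, Fin.val_rev] at hdim
    omega
  · have hTz : ‖T z.fst‖ ≤ T.singularValues i.rev * ‖z.fst‖ :=
      norm_apply_le_singularValues_mul_norm T rfl fun j hj => by
        simpa [f, WithLp.prod_inner_apply] using
          inner_eq_zero_of_mem_orthogonal_span_image hz (show j ∈ (s : Set _) by simpa [s] using hj)
    have hinner : -RCLike.re ⟪T z.fst, z.snd⟫_𝕜 ≤ ‖T z.fst‖ * ‖z.snd‖ := by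
      simpa using re_inner_le_norm (𝕜 := 𝕜) (T z.fst) (-z.snd)
    rw [re_inner_apply_self, WithLp.prod_norm_sq_eq_of_L2]
    nlinarith [mul_le_mul_of_nonneg_right hTz (norm_nonneg z.snd),
      mul_nonneg (T.singularValues_nonneg i.rev) (sq_nonneg (‖z.fst‖ - ‖z.snd‖))]

lemma singularValues_le_eigenvalues (T : E →ₗ[𝕜] F) {i : Fin N} (hi : 0 < T.singularValues i) :
    T.singularValues i ≤ (isSymmetric T).eigenvalues hN i := by
  set σ := T.singularValues i
  let v := T.isSymmetric_adjoint_comp_self.eigenvectorBasis rfl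
  have hiE : (i : ℕ) < finrank 𝕜 E := by
    contrapose! hi
    exact (T.singularValues_of_finrank_le hi).le
  let s : Finset (Fin (finrank 𝕜 E)) := Ioi ⟨i, hiE⟩
  let g : E →ₗ[𝕜] WithLp 2 (E × F) := (WithLp.linearEquiv 2 𝕜 (E × F)).symm.toLinearMap ∘ₗ
    LinearMap.id.prod (((σ⁻¹ : ℝ) : 𝕜) • T)
  have hg : Function.Injective g := fun x y h => by simpa [g] using congr(($h).fst)
  refine le_eigenvalues_of_forall_mem hN _ ((Submodule.span 𝕜 (v '' s))ᗮ.map g) ?_ ?_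
  · have hdim := finrank_le_card_add_finrank_orthogonal_span_image (𝕜 := 𝕜) v s
    have hcard : #s = finrank 𝕜 E - 1 - i := Fin.card_Ioi _
    rw [← (Submodule.equivMapOfInjective g hg _).finrank_eq]
    omega
  · rintro _ ⟨x, hx, rfl⟩
    have hTx : σ * ‖x‖ ≤ ‖T x‖ := singularValues_mul_norm_le_norm_apply T rfl fun j hj =>
      inner_eq_zero_of_mem_orthogonal_span_image hx (by simpa [s, Fin.lt_def] using hj)
    have hinner : RCLike.re ⟪T (g x).fst, (g x).snd⟫_𝕜 = σ⁻¹ * ‖T x‖ ^ 2 := by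
      simp [g, inner_smul_right, -map_inv₀]
    have hnorm : ‖g x‖ ^ 2 = ‖x‖ ^ 2 + (σ⁻¹ * ‖T x‖) ^ 2 := by
      rw [WithLp.prod_norm_sq_eq_of_L2]
      simp [g, norm_smul, abs_of_pos hi]
    have hsq : (σ * ‖x‖) ^ 2 ≤ ‖T x‖ ^ 2 := by gcongr
    rw [re_inner_apply_self, hinner, hnorm]
    field_simp
    linarith

lemma eigenvalues_eq (T : E →ₗ[𝕜] F) (i : Fin N) :
    (isSymmetric T).eigenvalues hN i = T.singularValues i - T.singularValues i.rev := by
  refine congrFun (eigenvalues_eq_of_le_of_sum_eq_trace hN (isSymmetric T)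
    (c := fun i => T.singularValues i - T.singularValues i.rev) (fun i => ?_) ?_) i
  · have hσ := T.singularValues_nonneg
    rcases (hσ i).eq_or_lt with hi | hi
    · simpa [← hi] using neg_singularValues_le_eigenvalues hN T i
    · exact (sub_le_self _ (hσ _)).trans (singularValues_le_eigenvalues hN T hi)
  · rw [trace_eq_zero, map_zero, sum_sub_distrib, sub_eq_zero]
    exact (Equiv.sum_comp Fin.revPerm fun i : Fin N => T.singularValues i).symm

lemma eigenvalues_of_lt (T : E →ₗ[𝕜] F) {i : Fin N} (hi : (i : ℕ) < finrank 𝕜 F) :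
    (isSymmetric T).eigenvalues hN i = T.singularValues i := by
  rw [eigenvalues_eq, singularValues_rev_eq_zero hN T hi, sub_zero]

lemma eigenvalues_rev_of_lt (T : E →ₗ[𝕜] F) {i : Fin N} (hi : (i : ℕ) < finrank 𝕜 F) :
    (isSymmetric T).eigenvalues hN i.rev = -T.singularValues i := by
  rw [eigenvalues_eq, singularValues_rev_eq_zero hN T hi, Fin.rev_rev, zero_sub]

lemma sum_eigenvalues_filter_lt (T : E →ₗ[𝕜] F) {m k : ℕ} (hmN : m ≤ N) (hm : m ≤ finrank 𝕜 F)
    (hk : k ≤ m) : ∑ j : Fin N with j.val < k, (isSymmetric T).eigenvalues hN j =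
      ∑ i : Fin m with i.val < k, T.singularValues i := by
  refine (sum_nbij (Fin.castLE hmN) (by simp) (Fin.castLE_injective _).injOn ?_ fun i _ =>
    (eigenvalues_of_lt hN T (i := Fin.castLE hmN i) (i.isLt.trans_le hm)).symm).symm
  intro j hj
  have hjk : (j : ℕ) < k := by simpa using hj
  exact ⟨⟨j, hjk.trans_le hk⟩, by simpa using hjk, rfl⟩

end hermitianDilation

end SingularValues

section Mirsky

open Module LinearMap

variable {𝕜 E F : Type*} [RCLike 𝕜]
  [NormedAddCommGroup E] [InnerProductSpace 𝕜 E] [FiniteDimensional 𝕜 E]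
  [NormedAddCommGroup F] [InnerProductSpace 𝕜 F] [FiniteDimensional 𝕜 F]

/- Mirsky's inequality: Lidskii's inequality for the dilations of `S` and `T`, applied at the index
`i` where `σᵢ(T) ≤ σᵢ(S)` and at the reversed index, carrying `-σᵢ`, elsewhere. -/
theorem sum_abs_singularValues_sub_le (S T : E →ₗ[𝕜] F) {m : ℕ} (hE : m ≤ finrank 𝕜 E)
    (hF : m ≤ finrank 𝕜 F) (s : Finset (Fin m)) :
    ∑ i ∈ s, |S.singularValues i - T.singularValues i| ≤
      ∑ i : Fin m with i.val < #s, (S - T).singularValues i := by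
  obtain ⟨N, hN⟩ : ∃ N, finrank 𝕜 (WithLp 2 (E × F)) = N := ⟨_, rfl⟩
  have hmN : 2 * m ≤ N := by
    rw [← hN, (WithLp.linearEquiv 2 𝕜 (E × F)).finrank_eq, finrank_prod]
    omega
  let ι : Fin m → Fin N := Fin.castLE (by omega)
  have hι (i : Fin m) : (ι i : ℕ) < finrank 𝕜 F := i.isLt.trans_le hF
  let e : Fin m → Fin N := fun i =>
    if T.singularValues i ≤ S.singularValues i then ι i else (ι i).rev
  have he : Function.Injective e := fun i j h => by
    ext
    simp only [e, ι] at h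
    split_ifs at h <;> simp [Fin.ext_iff, Fin.val_rev] at h <;> omega
  have hterm (i : Fin m) : |S.singularValues i - T.singularValues i| =
      (hermitianDilation.isSymmetric S).eigenvalues hN (e i) -
        (hermitianDilation.isSymmetric T).eigenvalues hN (e i) := by
    simp only [e]
    split_ifs with h
    · rw [hermitianDilation.eigenvalues_of_lt hN _ (hι i),
        hermitianDilation.eigenvalues_of_lt hN _ (hι i)]
      exact abs_of_nonneg (sub_nonneg.mpr h)
    · rw [hermitianDilation.eigenvalues_rev_of_lt hN _ (hι i),
        hermitianDilation.eigenvalues_rev_of_lt hN _ (hι i), neg_sub_neg]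
      exact abs_of_neg (sub_neg.mpr (not_le.mp h)) ▸ neg_sub _ _
  calc ∑ i ∈ s, |S.singularValues i - T.singularValues i|
      = ∑ j ∈ s.map ⟨e, he⟩, ((hermitianDilation.isSymmetric S).eigenvalues hN j -
          (hermitianDilation.isSymmetric T).eigenvalues hN j) := by
        rw [sum_map]
        exact sum_congr rfl fun i _ => hterm i
    _ ≤ ∑ j : Fin N with j.val < #s, (hermitianDilation.isSymmetric (S - T)).eigenvalues hN j := by
        simpa only [card_map, ← hermitianDilation.sub] using
          sum_eigenvalues_sub_le hN (hermitianDilation.isSymmetric S)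
            (hermitianDilation.isSymmetric T) (s.map ⟨e, he⟩)
    _ = ∑ i : Fin m with i.val < #s, (S - T).singularValues i :=
        hermitianDilation.sum_eigenvalues_filter_lt hN _ (by omega) hF
          (by simpa using s.card_le_univ)

end Mirsky

section SVD

open Module InnerProductSpace LinearMap

variable {𝕜 E F : Type*} [RCLike 𝕜]
  [NormedAddCommGroup E] [InnerProductSpace 𝕜 E] [FiniteDimensional 𝕜 E]
  [NormedAddCommGroup F] [InnerProductSpace 𝕜 F] [FiniteDimensional 𝕜 F]

lemma inner_apply_apply_eigenvectorBasis (T : E →ₗ[𝕜] F) {n : ℕ} (hn : finrank 𝕜 E = n)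
    (i j : Fin n) :
    ⟪T (T.isSymmetric_adjoint_comp_self.eigenvectorBasis hn i),
      T (T.isSymmetric_adjoint_comp_self.eigenvectorBasis hn j)⟫_𝕜 =
      if i = j then (T.singularValues i : 𝕜) ^ 2 else 0 := by
  rw [← adjoint_inner_left, ← LinearMap.comp_apply, IsSymmetric.apply_eigenvectorBasis,
    ← sq_singularValues_fin, inner_smul_left, OrthonormalBasis.inner_eq_ite]
  simp

lemma exists_orthonormalBasis_inner_apply_eigenvectorBasis (T : E →ₗ[𝕜] F) {m n : ℕ}
    (hm : finrank 𝕜 F = m) (hn : finrank 𝕜 E = n) :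
    ∃ u : OrthonormalBasis (Fin m) 𝕜 F, ∀ (i : Fin m) (j : Fin n),
      ⟪u i, T (T.isSymmetric_adjoint_comp_self.eigenvectorBasis hn j)⟫_𝕜 =
        if (i : ℕ) = j then (T.singularValues j : 𝕜) else 0 := by
  set v := T.isSymmetric_adjoint_comp_self.eigenvectorBasis hn
  have hinner := inner_apply_apply_eigenvectorBasis T hn
  let s : Set (Fin m) := {i | (i : ℕ) < n ∧ T.singularValues i ≠ 0}
  let w : Fin m → F := fun i =>
    if h : (i : ℕ) < n then (T.singularValues i : 𝕜)⁻¹ • T (v ⟨i, h⟩) else 0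
  have hw : Orthonormal 𝕜 (s.domRestrict w) := by
    rw [orthonormal_iff_ite]
    rintro ⟨i, hi, hi0⟩ ⟨j, hj, hj0⟩
    simp only [Set.domRestrict_apply, w, hi, hj, dif_pos, inner_smul_left, inner_smul_right,
      v, hinner, Fin.mk.injEq, Subtype.mk.injEq, Fin.val_inj]
    split_ifs with hij
    · subst hij
      have hi0' : (T.singularValues i : 𝕜) ≠ 0 := RCLike.ofReal_ne_zero.mpr hi0
      simp only [map_inv₀, RCLike.conj_ofReal]
      field_simp
    · simp
  obtain ⟨u, hu⟩ := hw.exists_orthonormalBasis_extension_of_card_eq (by simpa using hm)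
  refine ⟨u, fun i j => ?_⟩
  by_cases hj0 : T.singularValues j = 0
  · have hTv : T (v j) = 0 := by simpa [hj0] using hinner j j
    simp [hTv, hj0]
  have hjm : (j : ℕ) < m := by
    rw [← hm, ← not_le]
    exact fun h => hj0 <| T.singularValues_eq_zero_iff_le_finrank_range.mpr <|
      (Submodule.finrank_le _).trans h
  have hTv : T (v j) = (T.singularValues j : 𝕜) • u ⟨j, hjm⟩ := by
    rw [hu _ ⟨j.isLt, hj0⟩]
    simp [w, hj0]
  simp [hTv, inner_smul_right, u.inner_eq_ite, Fin.ext_iff]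

end SVD

section IsSVDVals

variable {n₁ n₂ : ℕ}

open LinearMap in
lemma isSVDVals_singularValues (X : Matrix (Fin n₁) (Fin n₂) ℝ) :
    IsSVDVals X fun i => (toEuclideanLin X).singularValues i := by
  set T := toEuclideanLin X
  let v := T.isSymmetric_adjoint_comp_self.eigenvectorBasis finrank_euclideanSpace_fin
  obtain ⟨u, hu⟩ := exists_orthonormalBasis_inner_apply_eigenvectorBasis T
    finrank_euclideanSpace_fin finrank_euclideanSpace_fin
  let e₁ := EuclideanSpace.basisFun (Fin n₁) ℝ
  let e₂ := EuclideanSpace.basisFun (Fin n₂) ℝ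
  have hD : T.toMatrix v.toBasis u.toBasis = diagRect fun i => T.singularValues i := by
    ext i j
    simp only [toMatrix_apply, OrthonormalBasis.coe_toBasis,
      OrthonormalBasis.coe_toBasis_repr_apply, OrthonormalBasis.repr_apply_apply, v, hu, diagRect,
      of_apply]
    split_ifs with h
    · simp [h]
    · rfl
  refine ⟨fun _ _ hij => T.singularValues_antitone hij, fun _ => T.singularValues_nonneg _,
    e₁.toBasis.toMatrix u, e₂.toBasis.toMatrix v,
    e₁.toMatrix_orthonormalBasis_conjTranspose_mul_self u,
    e₂.toMatrix_orthonormalBasis_conjTranspose_mul_self v, ?_⟩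
  have hV : (e₂.toBasis.toMatrix v)ᵀ = v.toBasis.toMatrix e₂ := by
    ext i j
    simp [Module.Basis.toMatrix_apply, OrthonormalBasis.repr_apply_apply, real_inner_comm]
  have hX : T.toMatrix e₂.toBasis e₁.toBasis = X := toMatrix_toLin e₂.toBasis e₁.toBasis X
  rw [← hD, hV, ← u.coe_toBasis, ← e₂.coe_toBasis,
    basis_toMatrix_mul_linearMap_toMatrix_mul_basis_toMatrix, hX]

lemma diagRect_transpose_mul_self (σ : Fin (min n₁ n₂) → ℝ) :
    (diagRect σ)ᵀ * diagRect σ = diagonal fun j : Fin n₂ =>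
      if h : (j : ℕ) < n₁ then σ ⟨j, lt_min h j.isLt⟩ ^ 2 else 0 := by
  ext i j
  simp only [mul_apply, diagonal_apply, transpose_apply, diagRect, of_apply]
  by_cases hi : (i : ℕ) < n₁
  · rw [Fintype.sum_eq_single ⟨i, hi⟩ fun k hk => by
      rw [dif_neg (by simpa [Fin.ext_iff] using hk), zero_mul]]
    rcases eq_or_ne i j with rfl | hij
    · simp [hi, sq]
    · simp [hij, Fin.val_inj]
  · rw [dif_neg hi, ite_self]
    exact sum_eq_zero fun k _ => by
      rw [dif_neg fun h : (k : ℕ) = i => hi (h ▸ k.isLt), zero_mul]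

lemma exists_orthonormalBasis_eq_col {𝕜 ι : Type*} [RCLike 𝕜] [Fintype ι] [DecidableEq ι]
    {V : Matrix ι ι 𝕜} (hV : Vᴴ * V = 1) :
    ∃ b : OrthonormalBasis ι 𝕜 (EuclideanSpace 𝕜 ι), ∀ j, b j = WithLp.toLp 2 (V.col j) := by
  have hcol : Orthonormal 𝕜 (Set.univ.domRestrict fun j => WithLp.toLp 2 (V.col j)) := by
    rw [orthonormal_iff_ite]
    rintro ⟨i, -⟩ ⟨j, -⟩
    simpa [hV, one_apply, col] using inner_matrix_col_col V V i j
  obtain ⟨b, hb⟩ := hcol.exists_orthonormalBasis_extension_of_card_eq (by simp)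
  exact ⟨b, fun j => hb j (Set.mem_univ j)⟩

namespace IsSVDVals

lemma singularValues_eq {X : Matrix (Fin n₁) (Fin n₂) ℝ} {σ : Fin (min n₁ n₂) → ℝ}
    (h : IsSVDVals X σ) (i : Fin (min n₁ n₂)) : (toEuclideanLin X).singularValues i = σ i := by
  obtain ⟨hσ, hσ0, U, V, hU, hV, rfl⟩ := h
  set X := U * diagRect σ * Vᵀ
  set c : Fin n₂ → ℝ := fun j => if h : (j : ℕ) < n₁ then σ ⟨j, lt_min h j.isLt⟩ ^ 2 else 0
  have hXV : Xᵀ * X * V = V * diagonal c := by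
    rw [← diagRect_transpose_mul_self]
    simp only [X, transpose_mul, transpose_transpose, Matrix.mul_assoc, hV, Matrix.mul_one]
    rw [← Matrix.mul_assoc Uᵀ, hU, Matrix.one_mul]
  have hc : Antitone c := fun i j hij => by
    by_cases hj : (j : ℕ) < n₁
    · have hi : (i : ℕ) < n₁ := lt_of_le_of_lt hij hj
      simp only [c, hi, hj, dif_pos]
      gcongr
      · exact hσ0 _
      · exact hσ hij
    · simp only [c, hj, dif_neg, not_false_eq_true]
      split_ifs <;> positivity
  obtain ⟨b, hb⟩ := exists_orthonormalBasis_eq_col hV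
  set T := toEuclideanLin X
  have hTb (j : Fin n₂) : (LinearMap.adjoint T ∘ₗ T) (b j) = c j • b j := by
    rw [← toEuclideanLin_conjTranspose_eq_adjoint]
    ext k
    have hcol : ((Xᵀ * X) *ᵥ V.col j) k = V k j * c j := by
      rw [← mul_diagonal, ← hXV]
      rfl
    simpa [T, hb, mul_comm] using hcol
  refine (T.singularValues_fin finrank_euclideanSpace_fin
    (Fin.castLE (min_le_right _ _) i)).trans ?_
  rw [eigenvalues_eq_of_antitone_eigenbasis _ _ b hc hTb]
  simp [c, i.isLt.trans_le (min_le_left _ _), Real.sqrt_sq (hσ0 i)]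

lemma eq_zero_of_rank_le {X : Matrix (Fin n₁) (Fin n₂) ℝ} {σ : Fin (min n₁ n₂) → ℝ}
    (h : IsSVDVals X σ) {i : Fin (min n₁ n₂)} (hi : X.rank ≤ i) : σ i = 0 := by
  rw [← h.singularValues_eq, LinearMap.singularValues_eq_zero_iff_le_finrank_range]
  rwa [X.rank_eq_finrank_range_toLin (PiLp.basisFun 2 ℝ _) (PiLp.basisFun 2 ℝ _)] at hi

theorem sum_abs_sub_le {A B : Matrix (Fin n₁) (Fin n₂) ℝ} {a b c : Fin (min n₁ n₂) → ℝ}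
    (hA : IsSVDVals A a) (hB : IsSVDVals B b) (hC : IsSVDVals (A - B) c)
    (s : Finset (Fin (min n₁ n₂))) :
    ∑ i ∈ s, |a i - b i| ≤ ∑ i : Fin (min n₁ n₂) with i.val < #s, c i := by
  simpa only [← map_sub, hA.singularValues_eq, hB.singularValues_eq, hC.singularValues_eq] using
    sum_abs_singularValues_sub_le (toEuclideanLin A) (toEuclideanLin B)
      (by simp) (by simp) s

lemma sum_add_sum_tail_le {A B : Matrix (Fin n₁) (Fin n₂) ℝ} {a b c : Fin (min n₁ n₂) → ℝ}
    (hA : IsSVDVals A a) (hB : IsSVDVals B b) (hC : IsSVDVals (A - B) c) {r : ℕ}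
    (hr : A.rank ≤ r) :
    ∑ i, a i + ∑ i : Fin (min n₁ n₂) with r ≤ i.val, c i ≤
      ∑ i, b i + ∑ i : Fin (min n₁ n₂) with i.val < r, c i := by
  have hmirsky : ∑ i, |a i - c i| ≤ ∑ i, b i := by
    have hB' : IsSVDVals (A - (A - B)) b := by rwa [sub_sub_cancel]
    simpa only [card_univ, Fintype.card_fin, Fin.is_lt, filter_true] using
      hA.sum_abs_sub_le hC hB' univ
  have hterm (i : Fin (min n₁ n₂)) :
      a i + (if r ≤ i.val then c i else 0) - (if i.val < r then c i else 0) ≤ |a i - c i| := by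
    rcases lt_or_ge i.val r with hi | hi
    · simpa only [hi, hi.not_ge, if_true, if_false, add_zero] using le_abs_self (a i - c i)
    · simpa [hi, hi.not_gt, hA.eq_zero_of_rank_le (hr.trans hi)] using le_abs_self (c i)
  have hsum := (sum_le_sum fun i _ => hterm i).trans hmirsky
  rw [sum_sub_distrib, sum_add_distrib, ← sum_filter, ← sum_filter] at hsum
  linarith

lemma sum_posPart_sub_le {A B : Matrix (Fin n₁) (Fin n₂) ℝ} {a b c : Fin (min n₁ n₂) → ℝ}
    (hA : IsSVDVals A a) (hB : IsSVDVals B b) (hC : IsSVDVals (A - B) c) {r : ℕ}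
    (hr : A.rank ≤ r) :
    ∑ i, (a i - b i)⁺ ≤ ∑ i : Fin (min n₁ n₂) with i.val < r, c i :=
  calc ∑ i, (a i - b i)⁺
      = ∑ i : Fin (min n₁ n₂) with i.val < r, (a i - b i)⁺ := by
        refine (sum_filter_of_ne fun i _ hi => ?_).symm
        contrapose! hi
        simpa [hA.eq_zero_of_rank_le (hr.trans hi)] using hB.2.1 i
    _ ≤ ∑ i : Fin (min n₁ n₂) with i.val < r, |a i - b i| :=
        sum_le_sum fun _ _ => sup_le (le_abs_self _) (abs_nonneg _)
    _ ≤ ∑ i : Fin (min n₁ n₂) with i.val < #{i : Fin (min n₁ n₂) | i.val < r}, c i :=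
        hA.sum_abs_sub_le hB hC _
    _ ≤ ∑ i : Fin (min n₁ n₂) with i.val < r, c i := by
        refine sum_le_sum_of_subset_of_nonneg (monotone_filter_right _ fun i _ hi => ?_)
          fun i _ _ => hC.2.1 i
        exact hi.trans_le <| Fin.card_filter_val_lt.trans_le (min_le_right _ _)

lemma sum_pos_of_ne_zero {X : Matrix (Fin n₁) (Fin n₂) ℝ} {σ : Fin (min n₁ n₂) → ℝ}
    (h : IsSVDVals X σ) (hX : X ≠ 0) : 0 < ∑ i, σ i := by
  obtain ⟨-, hσ0, U, V, -, -, rfl⟩ := h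
  refine (sum_nonneg fun i _ => hσ0 i).lt_of_ne' fun hsum => hX ?_
  have hσ := (sum_eq_zero_iff_of_nonneg fun i _ => hσ0 i).mp hsum
  have hD : diagRect σ = 0 := by
    ext i j
    simp [diagRect, hσ]
  rw [hD, Matrix.mul_zero, Matrix.zero_mul]

lemma sum_head_add_sum_tail_pos {X : Matrix (Fin n₁) (Fin n₂) ℝ} {σ : Fin (min n₁ n₂) → ℝ}
    (h : IsSVDVals X σ) (hX : X ≠ 0) (r : ℕ) :
    0 < ∑ i : Fin (min n₁ n₂) with i.val < r, σ i +
      ∑ i : Fin (min n₁ n₂) with r ≤ i.val, σ i := by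
  have hsplit := sum_filter_add_sum_filter_not univ (fun i => i.val < r) σ
  simp only [not_lt] at hsplit
  exact hsplit ▸ h.sum_pos_of_ne_zero hX

end IsSVDVals

end IsSVDVals

section Penalty

lemma phi_sub_phi {α x z : ℝ} (hα : 0 ≤ α) (hx : 0 ≤ x) (hz : 0 ≤ z) :
    phi α x - phi α z = α * (x - z) / ((1 + α * x) * (1 + α * z)) := by
  rw [phi, phi, abs_of_nonneg hx, abs_of_nonneg hz]
  field_simp
  ring

lemma phi_monotoneOn {α : ℝ} (hα : 0 ≤ α) : MonotoneOn (phi α) (Set.Ici 0) := by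
  intro z hz x hx hzx
  rw [Set.mem_Ici] at hz hx
  rw [← sub_nonneg, phi_sub_phi hα hx hz]
  have := sub_nonneg.mpr hzx
  positivity

lemma phi_sub_phi_lt {α x z : ℝ} (hα : 0 < α) (hz : 0 ≤ z) (hzx : z < x) :
    phi α x - phi α z < α * (x - z) := by
  have hx : 0 < x := hz.trans_lt hzx
  rw [phi_sub_phi hα.le hx.le hz]
  refine div_lt_self (mul_pos hα (sub_pos.mpr hzx)) ?_
  exact one_lt_mul_of_lt_of_le (by simp [hα, hx]) (le_add_of_nonneg_right (by positivity))

lemma sum_sub_sum_lt_mul_sum_posPart {ι : Type*} [Fintype ι] {φ : ℝ → ℝ} {α : ℝ}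
    (hφ : MonotoneOn φ (Set.Ici 0)) (hφα : ∀ z x, 0 ≤ z → z < x → φ x - φ z < α * (x - z))
    {x z : ι → ℝ} (hx : ∀ i, 0 ≤ x i) (hz : ∀ i, 0 ≤ z i) (hzx : ∃ i, z i < x i) :
    ∑ i, φ (x i) - ∑ i, φ (z i) < α * ∑ i, (x i - z i)⁺ := by
  have hlt (i : ι) (hi : z i < x i) : φ (x i) - φ (z i) < α * (x i - z i)⁺ := by
    rw [posPart_of_nonneg (sub_nonneg.mpr hi.le)]
    exact hφα _ _ (hz i) hi
  rw [← sum_sub_distrib, mul_sum]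
  obtain ⟨i₀, hi₀⟩ := hzx
  refine sum_lt_sum (fun i _ => ?_) ⟨i₀, mem_univ _, hlt i₀ hi₀⟩
  rcases lt_or_ge (z i) (x i) with hi | hi
  · exact (hlt i hi).le
  · rw [posPart_of_nonpos (sub_nonpos.mpr hi), mul_zero, sub_nonpos]
    exact hφ (hx i) (hz i) hi

end Penalty

theorem stmt4_general {n₁ n₂ r : ℕ} {M : Type*} [AddCommGroup M] [Module ℝ M]
    (𝒜 : Matrix (Fin n₁) (Fin n₂) ℝ →ₗ[ℝ] M) {φ : ℝ → ℝ} {α β : ℝ} (hβ : 0 < β)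
    (hφ : MonotoneOn φ (Set.Ici 0)) (hφα : ∀ z x, 0 ≤ z → z < x → φ x - φ z < α * (x - z))
    (hNSP : ∀ H : Matrix (Fin n₁) (Fin n₂) ℝ, 𝒜 H = 0 → H ≠ 0 →
      ∀ σH : Fin (min n₁ n₂) → ℝ, IsSVDVals H σH →
        (1 + β * α) * ∑ i : Fin (min n₁ n₂) with i.val < r, σH i ≤
          ∑ i : Fin (min n₁ n₂) with r ≤ i.val, σH i)
    (X : Matrix (Fin n₁) (Fin n₂) ℝ) (hrank : X.rank ≤ r) :
    ∀ Z : Matrix (Fin n₁) (Fin n₂) ℝ, 𝒜 Z = 𝒜 X → Z ≠ X →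
      ∀ σX σZ : Fin (min n₁ n₂) → ℝ, IsSVDVals X σX → IsSVDVals Z σZ →
        ∑ i, σX i + β * ∑ i, φ (σX i) < ∑ i, σZ i + β * ∑ i, φ (σZ i) := by
  intro Z hZ hZX σX σZ hσX hσZ
  have hα : 0 < α := by
    have h01 := hφ (Set.mem_Ici.mpr le_rfl) (Set.mem_Ici.mpr zero_le_one) zero_le_one
    linarith [hφα 0 1 le_rfl one_pos]
  have hXZ : X - Z ≠ 0 := sub_ne_zero.mpr hZX.symm
  have hσH := isSVDVals_singularValues (X - Z)
  set σH : Fin (min n₁ n₂) → ℝ := fun i => (toEuclideanLin (X - Z)).singularValues i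
  set head := ∑ i : Fin (min n₁ n₂) with i.val < r, σH i
  set tail := ∑ i : Fin (min n₁ n₂) with r ≤ i.val, σH i
  have htail : (1 + β * α) * head ≤ tail :=
    hNSP (X - Z) (by rw [map_sub, hZ, sub_self]) hXZ σH hσH
  have hnuclear : ∑ i, σX i + tail ≤ ∑ i, σZ i + head :=
    hσX.sum_add_sum_tail_le hσZ hσH hrank
  by_cases hlt : ∃ i, σZ i < σX i
  · have hpenalty : ∑ i, φ (σX i) - ∑ i, φ (σZ i) < α * head :=
      (sum_sub_sum_lt_mul_sum_posPart hφ hφα hσX.2.1 hσZ.2.1 hlt).trans_le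
        (by gcongr; exact hσX.sum_posPart_sub_le hσZ hσH hrank)
    linarith [mul_lt_mul_of_pos_left hpenalty hβ]
  · push Not at hlt
    have hpenalty : ∑ i, φ (σX i) ≤ ∑ i, φ (σZ i) :=
      sum_le_sum fun i _ => hφ (hσX.2.1 i) (hσZ.2.1 i) (hlt i)
    have hhead : 0 ≤ head := sum_nonneg fun i _ => hσH.2.1 i
    have hpos : 0 < head + tail := hσH.sum_head_add_sum_tail_pos hXZ r
    have hhead_lt : head < tail := by
      rcases hhead.eq_or_lt with h0 | h0
      · linarith
      · linarith [mul_pos (mul_pos hβ hα) h0]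
    linarith [mul_le_mul_of_nonneg_left hpenalty hβ.le]

theorem stmt4 {n₁ n₂ n₃ r : ℕ}
    (𝒜 : Matrix (Fin n₁) (Fin n₂) ℝ →ₗ[ℝ] (Fin n₃ → ℝ))
    (α β : ℝ) (hα : 0 < α) (hβ : 0 < β) (hr : r ≤ min n₁ n₂)
    (hNSP : ∀ H : Matrix (Fin n₁) (Fin n₂) ℝ, 𝒜 H = 0 → H ≠ 0 →
      ∀ σH : Fin (min n₁ n₂) → ℝ, IsSVDVals H σH →
        (1 + β * α) * ∑ i ∈ Finset.univ.filter (fun i : Fin (min n₁ n₂) => (i : ℕ) < r), σH i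
          ≤ ∑ i ∈ Finset.univ.filter (fun i : Fin (min n₁ n₂) => r ≤ (i : ℕ)), σH i)
    (X : Matrix (Fin n₁) (Fin n₂) ℝ) (hrank : X.rank ≤ r) :
    ∀ Z : Matrix (Fin n₁) (Fin n₂) ℝ, 𝒜 Z = 𝒜 X → Z ≠ X →
      ∀ σX σZ : Fin (min n₁ n₂) → ℝ, IsSVDVals X σX → IsSVDVals Z σZ →
        (∑ i, σX i) + β * ∑ i, phi α (σX i) <
        (∑ i, σZ i) + β * ∑ i, phi α (σZ i) := by
  exact stmt4_general 𝒜 hβ (phi_monotoneOn hα.le) (fun _ _ => phi_sub_phi_lt hα) hNSP X hrank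
end
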